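/- Let Γ be a finite simple graph and let W = W(Γ) be the associated right-angled Coxeter group. Let N be a finitely generated full normal subgroup of W. Then W/N is both abelian-by-finite and finite-by-abelian. -/

import Mathlib

/-- The defining relators of a right-angled Coxeter group: squares of the generators and
commutators of generators corresponding to adjacent vertices. -/
def racgRels {V : Type} (Γ : SimpleGraph V) : Set (FreeGroup V) :=
  { r | (∃ v : V, r = FreeGroup.of v * FreeGroup.of v) ∨
      ∃ v w : V, Γ.Adj v w ∧
        r = FreeGroup.of v * FreeGroup.of w * (FreeGroup.of v)⁻¹ * (FreeGroup.of w)⁻¹ }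

/-- The right-angled Coxeter group associated to the simple graph `Γ`. -/
abbrev RACG {V : Type} (Γ : SimpleGraph V) : Type := PresentedGroup (racgRels Γ)

/-- The subgroup `W(Δ)` of the RACG generated by the vertices in the set `S`. -/
def racgVertexSubgroup {V : Type} (Γ : SimpleGraph V) (S : Set V) : Subgroup (RACG Γ) :=
  Subgroup.closure { x | ∃ v ∈ S, x = PresentedGroup.of (rels := racgRels Γ) v }

/-- A set of vertices `S` is a join of two (nonempty) subgraphs if it can be split into
two nonempty pieces every two vertices of which (one from each piece) are adjacent. -/
def IsJoinOfTwo {V : Type} (Γ : SimpleGraph V) (S : Set V) : Prop :=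
  ∃ A B : Set V, A.Nonempty ∧ B.Nonempty ∧ Disjoint A B ∧ A ∪ B = S ∧
    ∀ a ∈ A, ∀ b ∈ B, Γ.Adj a b

/-- `P : Fin k → Set V` is a join decomposition of `Γ` into join-indecomposable pieces. -/
def IsJoinDecomposition {V : Type} (Γ : SimpleGraph V) {k : ℕ} (P : Fin k → Set V) : Prop :=
  (∀ i, (P i).Nonempty) ∧ (∀ v : V, ∃! i, v ∈ P i) ∧
    (∀ i j, i ≠ j → ∀ a ∈ P i, ∀ b ∈ P j, Γ.Adj a b) ∧
    (∀ i, ¬ IsJoinOfTwo Γ (P i))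

/-- A subgroup `N` of the RACG is full if for a join decomposition of `Γ` into
join-indecomposable pieces `Γ_1, …, Γ_k`, `N` intersects each `W(Γ_i)` nontrivially. -/
def IsFullSubgroup {V : Type} (Γ : SimpleGraph V) (N : Subgroup (RACG Γ)) : Prop :=
  ∀ (k : ℕ) (P : Fin k → Set V), IsJoinDecomposition Γ P →
    ∀ i, N ⊓ racgVertexSubgroup Γ (P i) ≠ ⊥

/-- A group is abelian-by-finite if it has an abelian normal subgroup of finite index. -/
def AbelianByFinite (Q : Type) [Group Q] : Prop :=
  ∃ A : Subgroup Q, A.Normal ∧ A.FiniteIndex ∧ ∀ x y : A, x * y = y * x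

/-- A group is finite-by-abelian if it has a finite normal subgroup with abelian quotient,
equivalently a finite normal subgroup containing all commutators. -/
def FiniteByAbelian (Q : Type) [Group Q] : Prop :=
  ∃ F : Subgroup Q, F.Normal ∧ Finite F ∧ ∀ x y : Q, x * y * x⁻¹ * y⁻¹ ∈ F

/-!
For each vertex `v`, the cosets of the star subgroup `W(star v)` are the walls of type `v`.
Recording by a sign whether a wall separates `1` from a given group element defines a crossed
homomorphism whose values have finite support. As `N` is finitely generated, either `N` has
finitely many orbits on the walls of type `v`, so that `W(star v) N` has finite index, or some wall
of type `v` is not crossed by `N`. In the latter case, normality of `N` allows us to move such a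
wall to the one between `1` and `v`. Then `N` and `vN = Nv` lie on opposite sides of that wall and
of all its `N`-translates; but it is the only wall of type `v` between `1` and `v`, so `N` fixes
it, that is, `N ≤ W(star v)`. Such a containment propagates along the complement graph, and
fullness then forces `v` to be adjacent to all other vertices. Thus `W(star v) N`, which
centralizes `v` modulo `N`, always has finite index. Hence `W/N` has a center of finite index, and
Schur's theorem applies.
-/

section Groups

open scoped commutatorElement

variable {G : Type*} [Group G]

theorem commutatorElement_mul_center {a b : G} (ha : a ∈ Subgroup.center G)
    (hb : b ∈ Subgroup.center G) (x y : G) : ⁅x * a, y * b⁆ = ⁅x, y⁆ := by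
  have hleft (c : G) : ⁅a, c⁆ = 1 :=
    commutatorElement_eq_one_iff_mul_comm.2 (Subgroup.mem_center_iff.1 ha c).symm
  have hright : ⁅x, b⁆ = 1 :=
    commutatorElement_eq_one_iff_mul_comm.2 (Subgroup.mem_center_iff.1 hb x)
  simp [commutatorElement_mul_left_eq_conj_mul, commutatorElement_mul_right_eq_mul_conj, hleft,
    hright]

theorem finite_commutatorSet_of_finiteIndex_center [(Subgroup.center G).FiniteIndex] :
    Finite (commutatorSet G) := by
  let Z := Subgroup.center G
  refine Set.Finite.to_subtype
    ((Set.finite_range fun p : (G ⧸ Z) × (G ⧸ Z) => ⁅p.1.out, p.2.out⁆).subset ?_)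
  rintro _ ⟨x, y, rfl⟩
  obtain ⟨a, ha⟩ := QuotientGroup.mk_out_eq_mul Z x
  obtain ⟨b, hb⟩ := QuotientGroup.mk_out_eq_mul Z y
  exact ⟨(x, y), by simp only [ha, hb, commutatorElement_mul_center a.2 b.2]⟩

theorem finiteIndex_center_of_closure_range_eq_top {ι : Type*} [Finite ι] {f : ι → G}
    (hf : Subgroup.closure (Set.range f) = ⊤)
    (h : ∀ i, (Subgroup.centralizer {f i}).FiniteIndex) : (Subgroup.center G).FiniteIndex := by
  have hinf := Subgroup.finiteIndex_iInf h
  refine Subgroup.finiteIndex_of_le (H := ⨅ i, Subgroup.centralizer {f i}) fun z hz => ?_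
  rw [← Subgroup.centralizer_univ, ← Subgroup.coe_top, ← hf, Subgroup.centralizer_closure]
  rintro _ ⟨i, rfl⟩
  exact (Subgroup.mem_iInf.1 hz i) _ rfl

theorem finiteIndex_centralizer_mk {H N : Subgroup G} [N.Normal] {g : G}
    (hg : H ≤ Subgroup.centralizer {g}) (h : (H ⊔ N).FiniteIndex) :
    (Subgroup.centralizer {(g : G ⧸ N)}).FiniteIndex := by
  have hle : H ⊔ N ≤ (Subgroup.centralizer {(g : G ⧸ N)}).comap (QuotientGroup.mk' N) := by
    refine sup_le (fun x hx => ?_) fun n hn => ?_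
    · rw [Subgroup.mem_comap, Subgroup.mem_centralizer_singleton_iff]
      exact congrArg (QuotientGroup.mk' N) (Subgroup.mem_centralizer_singleton_iff.1 (hg hx))
    · rw [Subgroup.mem_comap, QuotientGroup.mk'_apply, (QuotientGroup.eq_one_iff n).2 hn]
      exact one_mem _
  have := Subgroup.finiteIndex_of_le hle
  exact ⟨by rw [← Subgroup.index_comap_of_surjective _ (QuotientGroup.mk'_surjective N)]
            exact this.index_ne_zero⟩

theorem finiteIndex_sup_of_forall_exists_smul_mem {H N : Subgroup G} [hN : N.Normal]
    {F : Set (G ⧸ H)} (hF : F.Finite) (hcover : ∀ q : G ⧸ H, ∃ n ∈ N, n • q ∈ F) :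
    (H ⊔ N).FiniteIndex := by
  let π : G ⧸ H → G ⧸ (H ⊔ N) := Subgroup.quotientMapOfLE le_sup_left
  suffices hπ : π '' F = Set.univ by
    have : Finite (G ⧸ (H ⊔ N)) := Set.finite_univ_iff.1 (hπ ▸ hF.image π)
    exact Subgroup.finiteIndex_of_finite_quotient
  refine Set.eq_univ_of_forall fun q => ?_
  obtain ⟨x, rfl⟩ := QuotientGroup.mk_surjective q
  obtain ⟨n, hn, hnF⟩ := hcover x
  refine ⟨_, hnF, QuotientGroup.eq.2 (Subgroup.mem_sup_right ?_)⟩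
  simpa [mul_assoc] using hN.conj_mem _ (inv_mem hn) x⁻¹

end Groups

theorem AbelianByFinite.of_finiteIndex_center {Q : Type} [Group Q]
    (h : (Subgroup.center Q).FiniteIndex) : AbelianByFinite Q :=
  ⟨Subgroup.center Q, inferInstance, h,
    fun x y => Subtype.ext (Subgroup.mem_center_iff.1 y.2 x)⟩

theorem FiniteByAbelian.of_finiteIndex_center {Q : Type} [Group Q]
    (h : (Subgroup.center Q).FiniteIndex) : FiniteByAbelian Q := by
  have := finite_commutatorSet_of_finiteIndex_center (G := Q)
  refine ⟨commutator Q, inferInstance, inferInstance, fun x y => ?_⟩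
  exact Subgroup.commutator_mem_commutator (Subgroup.mem_top x) (Subgroup.mem_top y)

/-- A crossed homomorphism from `G` to the group of functions `X → M`, on which `G` acts through
its action on `X`. -/
def IsCrossedHom {G X M : Type*} [Group G] [MulAction G X] [Group M] (σ : G → X → M) : Prop :=
  ∀ g h x, σ (g * h) x = σ g x * σ h (g⁻¹ • x)

namespace IsCrossedHom

variable {G X M : Type*} [Group G] [MulAction G X] [Group M] {σ : G → X → M}

theorem map_one (hσ : IsCrossedHom σ) (x : X) : σ 1 x = 1 := by
  simpa using hσ 1 1 x

theorem map_inv (hσ : IsCrossedHom σ) (g : G) (x : X) : σ g⁻¹ x = (σ g (g • x))⁻¹ := by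
  rw [eq_inv_iff_mul_eq_one]
  simpa [hσ.map_one] using (hσ g⁻¹ g x).symm

theorem eq_one_of_mem_closure (hσ : IsCrossedHom σ) {S : Set G} {Y : Set X}
    (hY : ∀ g ∈ Subgroup.closure S, ∀ y ∈ Y, g • y ∈ Y) (hS : ∀ s ∈ S, ∀ y ∈ Y, σ s y = 1)
    {g : G} (hg : g ∈ Subgroup.closure S) {y : X} (hy : y ∈ Y) : σ g y = 1 := by
  induction hg using Subgroup.closure_induction generalizing y with
  | mem s hs => exact hS s hs y hy
  | one => exact hσ.map_one y
  | mul g h hg _ ihg ihh => rw [hσ, ihg hy, ihh (hY _ (inv_mem hg) _ hy), mul_one]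
  | inv g hg ih => rw [hσ.map_inv, ih (hY _ hg _ hy), inv_one]

theorem exists_finite_forall_exists_smul_mem_or (hσ : IsCrossedHom σ)
    (hfin : ∀ g, (Function.mulSupport (σ g)).Finite) {N : Subgroup G} (hN : N.FG) :
    ∃ F : Set X, F.Finite ∧ ∀ x, (∃ n ∈ N, n • x ∈ F) ∨ ∀ n ∈ N, σ n x = 1 := by
  obtain ⟨T, rfl⟩ := hN
  refine ⟨⋃ t ∈ T, Function.mulSupport (σ t), T.finite_toSet.biUnion fun t _ => hfin t,
    fun x => or_iff_not_imp_left.2 fun hx n hn => ?_⟩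
  push Not at hx
  refine hσ.eq_one_of_mem_closure (Y := {y | ∃ m ∈ Subgroup.closure (T : Set G), m • x = y})
    ?_ ?_ hn ⟨1, one_mem _, one_smul _ _⟩
  · rintro g hg _ ⟨m, hm, rfl⟩
    exact ⟨g * m, mul_mem hg hm, mul_smul _ _ _⟩
  · rintro t ht _ ⟨m, hm, rfl⟩
    by_contra hne
    exact hx m hm (Set.mem_biUnion ht hne)

end IsCrossedHom

namespace RACG

variable {V : Type} {Γ : SimpleGraph V}

/-- The generator of the right-angled Coxeter group attached to a vertex. -/
def gen (Γ : SimpleGraph V) (v : V) : RACG Γ :=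
  PresentedGroup.of v

theorem gen_mul_gen_self (v : V) : gen Γ v * gen Γ v = 1 := by
  have hrel := PresentedGroup.one_of_mem (rels := racgRels Γ) (.inl ⟨v, rfl⟩)
  rwa [map_mul] at hrel

theorem inv_gen (v : V) : (gen Γ v)⁻¹ = gen Γ v :=
  inv_eq_of_mul_eq_one_left (gen_mul_gen_self v)

theorem commute_gen {v w : V} (h : Γ.Adj v w) : Commute (gen Γ v) (gen Γ w) := by
  have hrel := PresentedGroup.one_of_mem (rels := racgRels Γ) (.inr ⟨v, w, h, rfl⟩)
  simp only [map_mul, _root_.map_inv] at hrel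
  exact mul_inv_eq_iff_eq_mul.1 (mul_inv_eq_one.1 hrel)

theorem closure_range_gen : Subgroup.closure (Set.range (gen Γ)) = ⊤ :=
  PresentedGroup.closure_range_of (racgRels Γ)

@[elab_as_elim]
theorem induction_mul_gen {p : RACG Γ → Prop} (one : p 1)
    (mul_gen : ∀ x s, p x → p (x * gen Γ s)) (x : RACG Γ) : p x := by
  have hx : x ∈ Subgroup.closure (Set.range (gen Γ)) :=
    closure_range_gen ▸ Subgroup.mem_top x
  induction hx using Subgroup.closure_induction_right with
  | one => exact one
  | mul_right x _ _ hs ih =>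
    obtain ⟨s, rfl⟩ := hs
    exact mul_gen x s ih
  | mul_inv_cancel x _ _ hs ih =>
    obtain ⟨s, rfl⟩ := hs
    rw [inv_gen]
    exact mul_gen x s ih

/-- The universal property of a right-angled Coxeter group. -/
def lift {G : Type*} [Group G] (f : V → G) (hsq : ∀ v, f v * f v = 1)
    (hcomm : ∀ v w, Γ.Adj v w → Commute (f v) (f w)) : RACG Γ →* G :=
  PresentedGroup.toGroup (f := f) <| by
    rintro _ (⟨v, rfl⟩ | ⟨v, w, h, rfl⟩)
    · simpa using hsq v
    · simp [(hcomm v w h).eq]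

theorem lift_gen {G : Type*} [Group G] {f : V → G} (hsq : ∀ v, f v * f v = 1)
    (hcomm : ∀ v w, Γ.Adj v w → Commute (f v) (f w)) (v : V) :
    lift f hsq hcomm (gen Γ v) = f v :=
  PresentedGroup.toGroup.of _

/-! ### Supports -/

theorem gen_mem_racgVertexSubgroup {S : Set V} {v : V} (h : v ∈ S) :
    gen Γ v ∈ racgVertexSubgroup Γ S :=
  Subgroup.subset_closure ⟨v, h, rfl⟩

theorem racgVertexSubgroup_mono {S T : Set V} (h : S ⊆ T) :
    racgVertexSubgroup Γ S ≤ racgVertexSubgroup Γ T :=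
  Subgroup.closure_mono fun _ ⟨v, hv, hx⟩ => ⟨v, h hv, hx⟩

theorem racgVertexSubgroup_empty : racgVertexSubgroup Γ ∅ = ⊥ := by
  simp [racgVertexSubgroup]

theorem racgVertexSubgroup_univ : racgVertexSubgroup Γ Set.univ = ⊤ := by
  refine (Subgroup.eq_top_iff' _).2 fun x => ?_
  induction x using induction_mul_gen with
  | one => exact one_mem _
  | mul_gen x s ih => exact mul_mem ih (gen_mem_racgVertexSubgroup (Set.mem_univ s))

open Classical in
/-- The retraction of `W(Γ)` onto `W(S)` killing the generators outside `S`. -/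
noncomputable def retraction (Γ : SimpleGraph V) (S : Set V) : RACG Γ →* RACG Γ :=
  lift (fun v => if v ∈ S then gen Γ v else 1)
    (fun v => by split_ifs <;> simp [gen_mul_gen_self])
    (fun v w h => by split_ifs <;> simp [commute_gen h])

theorem retraction_eq_self {S : Set V} {x : RACG Γ} (hx : x ∈ racgVertexSubgroup Γ S) :
    retraction Γ S x = x := by
  refine (Subgroup.closure_le (MonoidHom.eqLocus (retraction Γ S) (MonoidHom.id _))).2 ?_ hx
  rintro _ ⟨v, hv, rfl⟩
  exact (lift_gen _ _ v).trans (if_pos hv)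

theorem retraction_mem_racgVertexSubgroup_inter (S : Set V) {T : Set V} {x : RACG Γ}
    (hx : x ∈ racgVertexSubgroup Γ T) :
    retraction Γ S x ∈ racgVertexSubgroup Γ (S ∩ T) := by
  refine (Subgroup.closure_le ((racgVertexSubgroup Γ (S ∩ T)).comap (retraction Γ S))).2 ?_ hx
  rintro _ ⟨v, hv, rfl⟩
  change retraction Γ S (gen Γ v) ∈ racgVertexSubgroup Γ (S ∩ T)
  rw [retraction, lift_gen]
  split_ifs with hvS
  · exact gen_mem_racgVertexSubgroup ⟨hvS, hv⟩
  · exact one_mem _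

theorem racgVertexSubgroup_inf (S T : Set V) :
    racgVertexSubgroup Γ S ⊓ racgVertexSubgroup Γ T = racgVertexSubgroup Γ (S ∩ T) := by
  refine le_antisymm ?_ (le_inf (racgVertexSubgroup_mono Set.inter_subset_left)
    (racgVertexSubgroup_mono Set.inter_subset_right))
  rintro x ⟨hS, hT⟩
  rw [← retraction_eq_self hS]
  exact retraction_mem_racgVertexSubgroup_inter S hT

theorem exists_finset_mem_racgVertexSubgroup (x : RACG Γ) :
    ∃ S : Finset V, x ∈ racgVertexSubgroup Γ S := by
  classical
  induction x using induction_mul_gen with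
  | one => exact ⟨∅, one_mem _⟩
  | mul_gen x s ih =>
    obtain ⟨S, hx⟩ := ih
    refine ⟨insert s S, mul_mem (racgVertexSubgroup_mono ?_ hx) (gen_mem_racgVertexSubgroup ?_)⟩
    · exact Finset.coe_subset.2 (Finset.subset_insert s S)
    · exact Finset.mem_insert_self s S

theorem exists_support (x : RACG Γ) :
    ∃ S : Set V, ∀ T, x ∈ racgVertexSubgroup Γ T ↔ S ⊆ T := by
  classical
  obtain ⟨S, hS⟩ := exists_minimal_of_wellFoundedLT
    (fun S : Finset V => x ∈ racgVertexSubgroup Γ S) (exists_finset_mem_racgVertexSubgroup x)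
  refine ⟨S, fun T => ⟨fun hT => ?_, fun hST => racgVertexSubgroup_mono hST hS.prop⟩⟩
  have hinter : x ∈ racgVertexSubgroup Γ (S.filter (· ∈ T)) := by
    rw [Finset.coe_filter]
    exact racgVertexSubgroup_inf S T ▸ ⟨hS.prop, hT⟩
  exact fun t ht => (Finset.mem_filter.1 (hS.le_of_le hinter (Finset.filter_subset _ _) ht)).2

theorem exists_forall_mem_of_ne_one {x : RACG Γ} (hx : x ≠ 1) :
    ∃ t, ∀ T, x ∈ racgVertexSubgroup Γ T → t ∈ T := by
  obtain ⟨S, hS⟩ := exists_support x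
  obtain ⟨t, ht⟩ : S.Nonempty := by
    refine Set.nonempty_iff_ne_empty.2 ?_
    rintro rfl
    have hbot : x ∈ (⊥ : Subgroup (RACG Γ)) :=
      racgVertexSubgroup_empty ▸ (hS ∅).2 subset_rfl
    exact hx (Subgroup.mem_bot.1 hbot)
  exact ⟨t, fun T hT => (hS T).1 hT ht⟩

/-! ### Walls -/

/-- The subgroup generated by a vertex and its neighbours; it is contained in the centralizer of
the generator `gen Γ v`. -/
abbrev starSubgroup (Γ : SimpleGraph V) (v : V) : Subgroup (RACG Γ) :=
  racgVertexSubgroup Γ (insert v (Γ.neighborSet v))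

theorem starSubgroup_le_centralizer (v : V) :
    starSubgroup Γ v ≤ Subgroup.centralizer {gen Γ v} := by
  refine (Subgroup.closure_le _).2 ?_
  rintro _ ⟨t, ht, rfl⟩
  rw [SetLike.mem_coe, Subgroup.mem_centralizer_singleton_iff]
  rcases ht with rfl | ht
  · rfl
  · exact (commute_gen ht).symm.eq

theorem starSubgroup_eq_top_of_isIsolated_compl {v : V} (hv : Γᶜ.IsIsolated v) :
    starSubgroup Γ v = ⊤ := by
  suffices hstar : insert v (Γ.neighborSet v) = Set.univ by
    rw [starSubgroup, hstar, racgVertexSubgroup_univ]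
  refine Set.eq_univ_of_forall fun w => or_iff_not_imp_left.2 fun hne => ?_
  by_contra hadj
  exact hv w ((SimpleGraph.compl_adj _ _ _).2 ⟨Ne.symm hne, hadj⟩)

/-- The walls of type `v` of the Cayley graph of `W(Γ)`: the wall crossed by the edge from `u` to
`u * gen Γ v` is encoded as the coset `u W(star v)`. -/
abbrev Wall (Γ : SimpleGraph V) (v : V) : Type :=
  RACG Γ ⧸ starSubgroup Γ v

/-- The wall of type `v` separating `1` from the generator `gen Γ v`. -/
def baseWall (Γ : SimpleGraph V) (v : V) : Wall Γ v :=
  ((1 : RACG Γ) : RACG Γ ⧸ starSubgroup Γ v)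

variable {v : V}

theorem smul_baseWall_eq_iff {x : RACG Γ} :
    x • baseWall Γ v = baseWall Γ v ↔ x ∈ starSubgroup Γ v := by
  rw [eq_comm, baseWall, MulAction.Quotient.smul_coe, QuotientGroup.eq]
  simp

theorem gen_smul_baseWall (v : V) : gen Γ v • baseWall Γ v = baseWall Γ v :=
  smul_baseWall_eq_iff.2 (gen_mem_racgVertexSubgroup (Set.mem_insert v _))

theorem exists_smul_baseWall_eq (e : Wall Γ v) : ∃ u : RACG Γ, u • baseWall Γ v = e := by
  obtain ⟨u, rfl⟩ := QuotientGroup.mk_surjective e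
  exact ⟨u, by simp [baseWall]⟩

open Classical in
/-- The walls of type `v` separating `1` from the generator `gen Γ s`, as a sign function. -/
noncomputable def genSign (v s : V) (e : Wall Γ v) : ℤˣ :=
  if s = v ∧ e = baseWall Γ v then -1 else 1

theorem genSign_inv_smul {s : V} {x : RACG Γ} (hx : x ∈ starSubgroup Γ s) (e : Wall Γ v) :
    genSign v s (x⁻¹ • e) = genSign v s e := by
  have hbase (hs : s = v) : x⁻¹ • e = baseWall Γ v ↔ e = baseWall Γ v := by
    subst hs
    rw [inv_smul_eq_iff, smul_baseWall_eq_iff.2 hx]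
  classical
  exact if_congr (and_congr_right hbase) rfl rfl

/-- The homomorphism extending `gen Γ s ↦ (genSign v s, gen Γ s)`; its first component is the
crossed homomorphism `wallSign`. -/
noncomputable def wallHom (v : V) : RACG Γ →* (Wall Γ v → ℤˣ) ⋊[mulAutArrow] RACG Γ :=
  lift (fun s => ⟨genSign v s, gen Γ s⟩)
    (fun s => by
      ext1
      · funext e
        have hs : gen Γ s ∈ starSubgroup Γ s := gen_mem_racgVertexSubgroup (Set.mem_insert s _)
        exact (congrArg _ (genSign_inv_smul hs e)).trans (Int.units_mul_self _)
      · exact gen_mul_gen_self s)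
    (fun s t h => by
      have hs : gen Γ s ∈ starSubgroup Γ t := gen_mem_racgVertexSubgroup (Or.inr h.symm)
      have ht : gen Γ t ∈ starSubgroup Γ s := gen_mem_racgVertexSubgroup (Or.inr h)
      ext1
      · funext e
        change genSign v s e * genSign v t ((gen Γ s)⁻¹ • e) =
          genSign v t e * genSign v s ((gen Γ t)⁻¹ • e)
        rw [genSign_inv_smul hs, genSign_inv_smul ht, mul_comm]
      · exact commute_gen h)

theorem wallHom_gen (v s : V) : wallHom v (gen Γ s) = ⟨genSign v s, gen Γ s⟩ :=
  lift_gen _ _ s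

theorem wallHom_right (x : RACG Γ) : (wallHom v x).right = x := by
  induction x using induction_mul_gen with
  | one => simp
  | mul_gen x s ih => rw [map_mul, SemidirectProduct.mul_right, ih, wallHom_gen]

/-- `wallSign v x e` is `-1` if the wall `e` of type `v` separates `1` from `x`, and `1`
otherwise. -/
noncomputable def wallSign (v : V) (x : RACG Γ) : Wall Γ v → ℤˣ :=
  (wallHom v x).left

theorem isCrossedHom_wallSign (v : V) : IsCrossedHom (wallSign (Γ := Γ) v) := fun x y e => by
  rw [wallSign, map_mul, SemidirectProduct.mul_left, wallHom_right]
  rfl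

theorem wallSign_gen (v s : V) : wallSign v (gen Γ s) = genSign v s := by
  rw [wallSign, wallHom_gen]

theorem wallSign_mul_gen_of_ne {s : V} {x : RACG Γ} {e : Wall Γ v} (he : x • baseWall Γ v ≠ e) :
    wallSign v (x * gen Γ s) e = wallSign v x e := by
  rw [isCrossedHom_wallSign, wallSign_gen, genSign, if_neg, mul_one]
  exact fun h => he (inv_smul_eq_iff.1 h.2).symm

theorem finite_mulSupport_wallSign (x : RACG Γ) : (Function.mulSupport (wallSign v x)).Finite := by
  induction x using induction_mul_gen with
  | one =>
    convert Set.finite_empty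
    exact Function.mulSupport_eq_empty_iff.2 (funext (isCrossedHom_wallSign v).map_one)
  | mul_gen x s ih =>
    refine (ih.insert (x • baseWall Γ v)).subset fun e he => ?_
    by_contra hnot
    rw [Set.mem_insert_iff, not_or] at hnot
    exact he ((wallSign_mul_gen_of_ne (Ne.symm hnot.1)).trans (Function.notMem_mulSupport.1 hnot.2))

theorem wallSign_eq_one_of_notMem {S : Set V} (hv : v ∉ S) {x : RACG Γ}
    (hx : x ∈ racgVertexSubgroup Γ S) (e : Wall Γ v) : wallSign v x e = 1 := by
  refine (isCrossedHom_wallSign v).eq_one_of_mem_closure (Y := Set.univ)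
    (fun _ _ _ _ => Set.mem_univ _) ?_ hx (Set.mem_univ e)
  rintro _ ⟨s, hs, rfl⟩ e -
  change wallSign v (gen Γ s) e = 1
  rw [wallSign_gen, genSign, if_neg]
  rintro ⟨rfl, -⟩
  exact hv hs

/-- A path starting at `1` can be stopped just before it first crosses a wall of `U`. -/
theorem exists_smul_baseWall_mem_and_forall_wallSign_eq_one {U : Set (Wall Γ v)}
    (hU : U.Nonempty) :
    ∃ u : RACG Γ, u • baseWall Γ v ∈ U ∧ ∀ e ∈ U, wallSign v u e = 1 := by
  by_contra! hcross
  have hsign (x : RACG Γ) : ∀ e ∈ U, wallSign v x e = 1 := by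
    induction x using induction_mul_gen with
    | one => exact fun e _ => (isCrossedHom_wallSign v).map_one e
    | mul_gen x s ih =>
      have hx : x • baseWall Γ v ∉ U := fun hmem =>
        let ⟨e, he, hne⟩ := hcross x hmem
        hne (ih e he)
      exact fun e he => (wallSign_mul_gen_of_ne fun h => hx (h ▸ he)).trans (ih e he)
  obtain ⟨e, he⟩ := hU
  obtain ⟨u, rfl⟩ := exists_smul_baseWall_eq e
  obtain ⟨e, he', hne⟩ := hcross u he
  exact hne (hsign u e he')

/-! ### Walls not crossed by a normal subgroup -/

variable {N : Subgroup (RACG Γ)}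

theorem wallSign_smul_of_forall_eq_one {e : Wall Γ v} (he : ∀ n ∈ N, wallSign v n e = 1)
    {n : RACG Γ} (hn : n ∈ N) (x : RACG Γ) :
    wallSign v x (n • e) = wallSign v (n⁻¹ * x) e := by
  rw [isCrossedHom_wallSign, he _ (inv_mem hn), one_mul, inv_inv]

theorem le_starSubgroup_of_forall_wallSign_baseWall_eq_one [hN : N.Normal]
    (h : ∀ n ∈ N, wallSign v n (baseWall Γ v) = 1) : N ≤ starSubgroup Γ v := by
  intro n hn
  have hconj : (gen Γ v)⁻¹ * n⁻¹ * gen Γ v ∈ N := by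
    simpa using hN.conj_mem _ (inv_mem hn) (gen Γ v)⁻¹
  have hfix : (gen Γ v)⁻¹ • baseWall Γ v = baseWall Γ v := by
    rw [inv_gen, gen_smul_baseWall]
  have hcross : wallSign v (gen Γ v) (n • baseWall Γ v) = -1 :=
    calc wallSign v (gen Γ v) (n • baseWall Γ v)
        = wallSign v (gen Γ v * ((gen Γ v)⁻¹ * n⁻¹ * gen Γ v)) (baseWall Γ v) := by
          rw [wallSign_smul_of_forall_eq_one h hn]
          congr 1
          group
      _ = wallSign v (gen Γ v) (baseWall Γ v) := by
          rw [isCrossedHom_wallSign, hfix, h _ hconj, mul_one]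
      _ = -1 := by rw [wallSign_gen, genSign, if_pos ⟨rfl, rfl⟩]
  rw [wallSign_gen, genSign] at hcross
  by_contra hne
  rw [if_neg fun h => hne (smul_baseWall_eq_iff.1 h.2)] at hcross
  exact absurd hcross (by decide)

theorem le_starSubgroup_of_forall_wallSign_eq_one [hN : N.Normal] {e : Wall Γ v}
    (he : ∀ n ∈ N, wallSign v n e = 1) : N ≤ starSubgroup Γ v := by
  let U : Set (Wall Γ v) := {e | ∀ n ∈ N, wallSign v n e = 1}
  have hU : ∀ n ∈ N, ∀ e ∈ U, n • e ∈ U := fun n hn e he m hm => by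
    rw [wallSign_smul_of_forall_eq_one he hn, he _ (mul_mem (inv_mem hn) hm)]
  obtain ⟨u, huU, hu⟩ := exists_smul_baseWall_mem_and_forall_wallSign_eq_one (U := U) ⟨e, he⟩
  refine le_starSubgroup_of_forall_wallSign_baseWall_eq_one fun m hm => ?_
  have hconj : u * m * u⁻¹ ∈ N := hN.conj_mem m hm u
  calc wallSign v m (baseWall Γ v)
      = wallSign v (u * m) (u • baseWall Γ v) := by
        rw [isCrossedHom_wallSign, hu _ huU, one_mul, inv_smul_smul]
    _ = wallSign v (u * m * u⁻¹ * u) (u • baseWall Γ v) := by rw [inv_mul_cancel_right]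
    _ = 1 := by
        rw [isCrossedHom_wallSign, huU _ hconj, hu _ (hU _ (inv_mem hconj) _ huU), mul_one]

theorem finiteIndex_starSubgroup_sup_or_le [N.Normal] (hfg : N.FG) (v : V) :
    (starSubgroup Γ v ⊔ N).FiniteIndex ∨ N ≤ starSubgroup Γ v := by
  refine or_iff_not_imp_right.2 fun hle => ?_
  obtain ⟨F, hF, hcover⟩ := (isCrossedHom_wallSign v).exists_finite_forall_exists_smul_mem_or
    finite_mulSupport_wallSign hfg
  exact finiteIndex_sup_of_forall_exists_smul_mem hF fun e =>
    (hcover e).resolve_right fun he => hle (le_starSubgroup_of_forall_wallSign_eq_one he)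

theorem le_starSubgroup_of_compl_adj [N.Normal] {v w : V} (hv : N ≤ starSubgroup Γ v)
    (hvw : Γᶜ.Adj v w) : N ≤ starSubgroup Γ w := by
  have hw : w ∉ insert v (Γ.neighborSet v) := by
    simpa [not_or] using ⟨hvw.ne', ((SimpleGraph.compl_adj _ _ _).1 hvw).2⟩
  exact le_starSubgroup_of_forall_wallSign_eq_one (e := baseWall Γ w) fun n hn =>
    wallSign_eq_one_of_notMem hw (hv hn) _

theorem le_starSubgroup_of_compl_reachable [N.Normal] {v w : V} (hv : N ≤ starSubgroup Γ v)
    (hvw : Γᶜ.Reachable v w) : N ≤ starSubgroup Γ w := by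
  obtain ⟨p⟩ := hvw
  induction p with
  | nil => exact hv
  | cons hadj _ ih => exact ih (le_starSubgroup_of_compl_adj hv hadj)

end RACG

/-! ### Join decompositions and fullness -/

section Joins

variable {V : Type} {Γ : SimpleGraph V}

theorem not_isJoinOfTwo_compl_supp (C : Γᶜ.ConnectedComponent) : ¬ IsJoinOfTwo Γ C.supp := by
  rintro ⟨A, B, ⟨a, ha⟩, ⟨b, hb⟩, hdisj, hunion, hadj⟩
  have haC : a ∈ C.supp := hunion ▸ Or.inl ha
  have hbC : b ∈ C.supp := hunion ▸ Or.inr hb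
  obtain ⟨p⟩ := C.reachable_of_mem_supp haC hbC
  obtain ⟨d, -, hfst, hsnd⟩ := p.exists_boundary_dart A ha (Set.disjoint_right.1 hdisj hb)
  have hfstC : d.fst ∈ C.supp := hunion ▸ Or.inl hfst
  have hsndC : d.snd ∈ A ∪ B := hunion ▸ C.mem_supp_of_adj_mem_supp hfstC d.adj
  exact ((SimpleGraph.compl_adj _ _ _).1 d.adj).2 (hadj _ hfst _ (hsndC.resolve_left hsnd))

theorem isJoinDecomposition_compl_supp {k : ℕ} (c : Fin k ≃ Γᶜ.ConnectedComponent) :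
    IsJoinDecomposition Γ fun i => (c i).supp := by
  refine ⟨fun i => (c i).nonempty_supp, fun v => ?_, fun i j hij a ha b hb => ?_,
    fun i => not_isJoinOfTwo_compl_supp (c i)⟩
  · exact ⟨c.symm (Γᶜ.connectedComponentMk v), by simp, fun j hj => by simp_all⟩
  · by_contra hab
    rw [SimpleGraph.ConnectedComponent.mem_supp_iff] at ha hb
    have hne : a ≠ b := fun h => hij (c.injective (by rw [← ha, ← hb, h]))
    have hreach : Γᶜ.Reachable a b := ((SimpleGraph.compl_adj _ _ _).2 ⟨hne, hab⟩).reachable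
    exact hij (c.injective (by rw [← ha, ← hb, SimpleGraph.ConnectedComponent.eq.2 hreach]))

theorem IsFullSubgroup.inf_compl_supp_ne_bot [Finite Γᶜ.ConnectedComponent]
    {N : Subgroup (RACG Γ)} (hN : IsFullSubgroup Γ N) (C : Γᶜ.ConnectedComponent) :
    N ⊓ racgVertexSubgroup Γ C.supp ≠ ⊥ := by
  let c := (Finite.equivFin Γᶜ.ConnectedComponent).symm
  simpa using hN _ _ (isJoinDecomposition_compl_supp c) (c.symm C)

namespace RACG

variable {N : Subgroup (RACG Γ)} [N.Normal]

theorem starSubgroup_eq_top_of_le [Finite Γᶜ.ConnectedComponent] (hfull : IsFullSubgroup Γ N)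
    {v : V} (hv : N ≤ starSubgroup Γ v) : starSubgroup Γ v = ⊤ := by
  obtain ⟨⟨n, hnN, hnC⟩, hn⟩ := Subgroup.ne_bot_iff_exists_ne_one.1
    (hfull.inf_compl_supp_ne_bot (Γᶜ.connectedComponentMk v))
  obtain ⟨t, ht⟩ := exists_forall_mem_of_ne_one (Subtype.coe_ne_coe.2 hn)
  have hvt : Γᶜ.Reachable v t := (SimpleGraph.ConnectedComponent.exact (ht _ hnC)).symm
  have hisolated : Γᶜ.IsIsolated t := fun s hts => by
    have hs : t = s ∨ Γ.Adj s t :=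
      ht _ (le_starSubgroup_of_compl_reachable hv (hvt.trans hts.reachable) hnN)
    exact hs.elim hts.ne fun hadj => ((SimpleGraph.compl_adj _ _ _).1 hts).2 hadj.symm
  obtain rfl : v = t := by
    by_contra hne
    exact SimpleGraph.not_reachable_of_neighborSet_right_eq_empty hne
      ((SimpleGraph.neighborSet_eq_empty _).2 hisolated) hvt
  exact starSubgroup_eq_top_of_isIsolated_compl hisolated

theorem finiteIndex_starSubgroup_sup [Finite Γᶜ.ConnectedComponent] (hfg : N.FG)
    (hfull : IsFullSubgroup Γ N) (v : V) : (starSubgroup Γ v ⊔ N).FiniteIndex := by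
  rcases finiteIndex_starSubgroup_sup_or_le hfg v with h | hle
  · exact h
  · rw [starSubgroup_eq_top_of_le hfull hle, top_sup_eq]
    infer_instance

theorem finiteIndex_center_quotient [Finite V] (hfg : N.FG) (hfull : IsFullSubgroup Γ N) :
    (Subgroup.center (RACG Γ ⧸ N)).FiniteIndex := by
  have hgen : Subgroup.closure (Set.range fun v => (gen Γ v : RACG Γ ⧸ N)) = ⊤ := by
    change Subgroup.closure (Set.range (QuotientGroup.mk' N ∘ gen Γ)) = ⊤
    rw [Set.range_comp, ← MonoidHom.map_closure, closure_range_gen,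
      Subgroup.map_top_of_surjective _ (QuotientGroup.mk'_surjective N)]
  exact finiteIndex_center_of_closure_range_eq_top hgen fun v =>
    finiteIndex_centralizer_mk (starSubgroup_le_centralizer v)
      (finiteIndex_starSubgroup_sup hfg hfull v)

end RACG

end Joins

theorem quotient_of_RACG_by_fg_full_normal_subgroup
    {V : Type} [Fintype V] (Γ : SimpleGraph V)
    (N : Subgroup (RACG Γ)) [N.Normal]
    (hfg : N.FG) (hfull : IsFullSubgroup Γ N) :
    AbelianByFinite (RACG Γ ⧸ N) ∧ FiniteByAbelian (RACG Γ ⧸ N) := by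
  have hcenter := RACG.finiteIndex_center_quotient hfg hfull
  exact ⟨.of_finiteIndex_center hcenter, .of_finiteIndex_center hcenter⟩
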